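/- The set F(X,Ω) of (X,Ω)-decorated planar rooted forests, equipped with concatenation of forests, the grafting operators B_ω (ω ∈ Ω), and the map j_X sending x ∈ X to the single-leaf forest decorated by x, is the free Ω-operated semigroup on X. Precisely: for every semigroup H, every family of maps α_ω : H → H (ω ∈ Ω), and every map f : X → H, there exists a unique semigroup homomorphism φ : F(X,Ω) → H such that φ(j_X(x)) = f(x) for every x ∈ X and φ(B_ω(F)) = α_ω(φ(F)) for every forest F and every ω ∈ Ω. -/

import Mathlib

mutual
  /-- `(X,Ω)`-decorated planar rooted trees: a leaf decorated by `x ∈ X`, or a node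
  decorated by `ω ∈ Ω` with a nonempty finite ordered list of subtrees (a forest). -/
  inductive PTree (X : Type u) (Ω : Type v) : Type (max u v)
    | leaf : X → PTree X Ω
    | node : Ω → PForest X Ω → PTree X Ω

  /-- `(X,Ω)`-decorated planar rooted forests: nonempty finite ordered lists of trees. -/
  inductive PForest (X : Type u) (Ω : Type v) : Type (max u v)
    | single : PTree X Ω → PForest X Ω
    | cons : PTree X Ω → PForest X Ω → PForest X Ω
end

/-- Concatenation of forests. -/
def PForest.mul {X : Type u} {Ω : Type v} : PForest X Ω → PForest X Ω → PForest X Ω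
  | .single t, G => .cons t G
  | .cons t F, G => .cons t (PForest.mul F G)

instance {X : Type u} {Ω : Type v} : Mul (PForest X Ω) := ⟨PForest.mul⟩

theorem PForest.mul_assoc {X : Type u} {Ω : Type v} :
    ∀ a b c : PForest X Ω, a * b * c = a * (b * c)
  | .single _, _, _ => rfl
  | .cons t F, b, c => congrArg (PForest.cons t) (PForest.mul_assoc F b c)

/-- `F(X,Ω)` is a semigroup under concatenation of forests. -/
instance {X : Type u} {Ω : Type v} : Semigroup (PForest X Ω) where
  mul_assoc := PForest.mul_assoc

/-- The grafting operator `B_ω`, sending a forest `(T₁,…,T_b)` to the one-tree forest with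
root decorated by `ω` and ordered subtrees `T₁,…,T_b`. -/
def graft {X : Type u} {Ω : Type v} (ω : Ω) (F : PForest X Ω) : PForest X Ω :=
  .single (.node ω F)

/-- The map `j_X : X → F(X,Ω)` sending `x` to the single-leaf forest decorated by `x`. -/
def jPF {X : Type u} {Ω : Type v} (x : X) : PForest X Ω :=
  .single (.leaf x)

mutual
  /-- Evaluation of a tree in an operated semigroup. -/
  def PTree.lift {X : Type u} {Ω : Type v} {H : Type w} [Mul H] (α : Ω → H → H) (f : X → H) :
      PTree X Ω → H
    | .leaf x => f x
    | .node ω F => α ω (PForest.lift α f F)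

  /-- Evaluation of a forest in an operated semigroup. -/
  def PForest.lift {X : Type u} {Ω : Type v} {H : Type w} [Mul H] (α : Ω → H → H) (f : X → H) :
      PForest X Ω → H
    | .single t => PTree.lift α f t
    | .cons t F => PTree.lift α f t * PForest.lift α f F
end

theorem PForest.lift_mul {X : Type u} {Ω : Type v} {H : Type w} [Semigroup H]
    (α : Ω → H → H) (f : X → H) : ∀ F G : PForest X Ω,
    PForest.lift α f (F * G) = PForest.lift α f F * PForest.lift α f G
  | .single t, G => by
    change PForest.lift α f (.cons t G) = _
    simp only [PForest.lift]
  | .cons t F, G => by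
    change PForest.lift α f (.cons t (F * G)) = _
    simp only [PForest.lift, PForest.lift_mul α f F G, _root_.mul_assoc]

mutual
  theorem PTree.lift_unique {X : Type u} {Ω : Type v} {H : Type w} [Semigroup H]
      (α : Ω → H → H) (f : X → H) (φ : PForest X Ω →ₙ* H) (h1 : ∀ x : X, φ (jPF x) = f x)
      (h2 : ∀ (ω : Ω) (F : PForest X Ω), φ (graft ω F) = α ω (φ F)) :
      ∀ t : PTree X Ω, φ (.single t) = PTree.lift α f t
    | .leaf x => by
      rw [PTree.lift]
      exact h1 x
    | .node ω F => by
      rw [PTree.lift, ← PForest.lift_unique α f φ h1 h2 F]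
      exact h2 ω F

  theorem PForest.lift_unique {X : Type u} {Ω : Type v} {H : Type w} [Semigroup H]
      (α : Ω → H → H) (f : X → H) (φ : PForest X Ω →ₙ* H) (h1 : ∀ x : X, φ (jPF x) = f x)
      (h2 : ∀ (ω : Ω) (F : PForest X Ω), φ (graft ω F) = α ω (φ F)) :
      ∀ F : PForest X Ω, φ F = PForest.lift α f F
    | .single t => by
      rw [PForest.lift]
      exact PTree.lift_unique α f φ h1 h2 t
    | .cons t F => by
      rw [PForest.lift, ← PTree.lift_unique α f φ h1 h2 t, ← PForest.lift_unique α f φ h1 h2 F]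
      exact map_mul φ (.single t) F
end

/-- `(F(X,Ω), concatenation, {B_ω}, j_X)` is the free `Ω`-operated semigroup on `X`:
for every semigroup `H`, family of maps `α_ω : H → H` and map `f : X → H`, there is a
unique semigroup homomorphism `φ : F(X,Ω) → H` with `φ (j_X x) = f x` for all `x ∈ X` and
`φ (B_ω F) = α_ω (φ F)` for every forest `F` and `ω ∈ Ω`. -/
theorem decoratedForests_free_operated_semigroup
    (X Ω : Type*) [Nonempty X] [Nonempty Ω]
    (H : Type*) [Semigroup H] (α : Ω → H → H) (f : X → H) :
    ∃! φ : PForest X Ω →ₙ* H,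
      (∀ x : X, φ (jPF x) = f x) ∧
      ∀ (ω : Ω) (F : PForest X Ω), φ (graft ω F) = α ω (φ F) := by
  refine ⟨⟨PForest.lift α f, PForest.lift_mul α f⟩, ⟨fun x => ?_, fun ω F => ?_⟩, ?_⟩
  · change PForest.lift α f (.single (.leaf x)) = f x
    simp only [PForest.lift, PTree.lift]
  · change PForest.lift α f (.single (.node ω F)) = α ω (PForest.lift α f F)
    simp only [PForest.lift, PTree.lift]
  · rintro φ ⟨h1, h2⟩
    ext F
    exact PForest.lift_unique α f φ h1 h2 F
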